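/- arXiv:0907.1004 — 2 statements merged into one kernel-verified Lean document; each statement's English description precedes it below -/
import Mathlib

section
/- The q-tangent number satisfies E_{2n+1}(q) = \frac{1}{(1-q)^{2n+1}} \sum_{k=0}^n \left( \binom{2n+1}{n-k} - \binom{2n+1}{n-k-1} \right) \sum_{i=0}^{2k+1} (-1)^{i+k} q^{i(2k+2-i)}, where E_{2n+1}(q) is defined as the sum over weighted Dyck paths of length 2n: each up step from height h carries weight q^a for some 0 \le a \le h, each down step from height h carries weight q^a for some 0 \le a \le h, and the path weight is the product of step weights; E_{2n+1}(q) is the sum of weights over all such weighted paths. -/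
open Finset Polynomial
open scoped Classical

noncomputable section
/-- The value of a step: `+1` for an up step, `-1` for a down step. -/
def stepVal (b : Bool) : ℤ := if b then 1 else -1

/-- Height of the path after its first `i` steps. -/
def pathHeight {m : ℕ} (s : Fin m → Bool) (i : ℕ) : ℤ :=
  ∑ j : Fin m, if (j : ℕ) < i then stepVal (s j) else 0

/-- A Dyck path: all partial sums nonnegative, final height `0`. -/
def IsDyck {m : ℕ} (s : Fin m → Bool) : Prop :=
  (∀ i : Fin m, 0 ≤ pathHeight s ((i : ℕ) + 1)) ∧ pathHeight s m = 0
/-- The `q`-integer `[k]_q = 1 + q + ⋯ + q^(k-1)` as a polynomial in `ℤ[q]`. -/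
def qNum (k : ℕ) : Polynomial ℤ := ∑ j ∈ Finset.range k, X ^ j

/-- The `q`-tangent polynomial `E_{2n+1}(q)`: sum over Dyck paths of length `2n`,
where every step (up or down) starting at height `h` contributes `[h+1]_q`. -/
def Etan (n : ℕ) : Polynomial ℤ :=
  ∑ s ∈ Finset.univ.filter (fun s : Fin (2*n) → Bool => IsDyck s),
    ∏ i : Fin (2*n), qNum ((pathHeight s (i : ℕ)).toNat + 1)

/-- The `q`-secant polynomial `E_{2n}(q)`: sum over Dyck paths of length `2n`,
where an up step from height `h` contributes `[h+1]_q` and a down step from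
height `h` contributes `[h]_q`. -/
def Esec (n : ℕ) : Polynomial ℤ :=
  ∑ s ∈ Finset.univ.filter (fun s : Fin (2*n) → Bool => IsDyck s),
    ∏ i : Fin (2*n),
      if s i then qNum ((pathHeight s (i : ℕ)).toNat + 1)
      else qNum ((pathHeight s (i : ℕ)).toNat)
/-- Binomial coefficient `a choose b` with integer lower index, equal to `0`
when `b < 0`. -/
def chooseInt (a : ℕ) (b : ℤ) : ℤ := if 0 ≤ b then a.choose b.toNat else 0

/-!
Multiplying each step of a Dyck path by `1 - q` turns `(1 - q)^(2n) E_{2n+1}(q)` into a path sum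
whose steps from height `h` weigh `1 - q^(h+1)`, hence into `(Aⁿ δ₀)(0)` for the operator `A` that
takes two steps at once. On the other side, write `T` for the shift of two-sided sequences and
extend the inner alternating sums of the formula to a sequence `s` on `ℤ` that is odd. Cancelling
the terms of opposite index, the formula becomes `(Sⁿ (1 + T) s)(0)` with
`S = T + 2 + T⁻¹ = T⁻¹ (1 + T)²`.

So two linear functionals on polynomials in one variable `x` have to agree on `xⁿ`, namely
`p ↦ (1 - q) (p(A) δ₀)(0)` and `p ↦ (p(S) (1 + T) s)(0)`. They do because on the basis
`p_k = ∏_{i=1}^k ((1 - q^(2i))² + q^(2i) x)` both take the value `(1 - q) ⋯ (1 - q^(2k+1))`: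
`p_k(A) δ₀` is an explicit Gaussian binomial vector, and
`p_k(S) = ∏_{i=1}^k (1 + q^(2i) T) (1 + q^(2i) T⁻¹)` inherits a `q`-difference equation from `s`.
-/

section WeightedPaths

variable {R : Type*} [CommSemiring R] {m : ℕ}

lemma pathHeight_zero (s : Fin m → Bool) : pathHeight s 0 = 0 := by
  simp [pathHeight]

lemma pathHeight_cons_succ (b : Bool) (s : Fin m → Bool) (i : ℕ) :
    pathHeight (Fin.cons b s : Fin (m + 1) → Bool) (i + 1) = stepVal b + pathHeight s i := by
  simp [pathHeight, Fin.sum_univ_succ]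

/-- The path with steps `s` started at height `h` stays nonnegative and ends at height `0`. -/
def IsDyckFrom (h : ℤ) (s : Fin m → Bool) : Prop :=
  (∀ i ≤ m, 0 ≤ h + pathHeight s i) ∧ h + pathHeight s m = 0

lemma isDyckFrom_zero_iff (s : Fin m → Bool) : IsDyckFrom 0 s ↔ IsDyck s := by
  simp only [IsDyckFrom, IsDyck, zero_add]
  refine and_congr_left fun _ => ⟨fun hs i => hs _ i.isLt, fun hs i hi => ?_⟩
  rcases i with _ | i
  · rw [pathHeight_zero]
  · exact hs ⟨i, hi⟩

lemma IsDyckFrom.nonneg {h : ℤ} {s : Fin m → Bool} (hs : IsDyckFrom h s) : 0 ≤ h := by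
  simpa only [pathHeight_zero, add_zero] using hs.1 0 m.zero_le

lemma isDyckFrom_cons_iff {h : ℤ} (hh : 0 ≤ h) (b : Bool) (s : Fin m → Bool) :
    IsDyckFrom h (Fin.cons b s : Fin (m + 1) → Bool) ↔ IsDyckFrom (h + stepVal b) s := by
  simp only [IsDyckFrom, pathHeight_cons_succ, ← add_assoc]
  refine and_congr_left fun _ => ⟨fun hs i hi => ?_, fun hs i hi => ?_⟩
  · simpa only [pathHeight_cons_succ, ← add_assoc] using hs (i + 1) (by lia)
  · rcases i with _ | i
    · simpa only [pathHeight_zero, add_zero] using hh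
    · simpa only [pathHeight_cons_succ, ← add_assoc] using hs i (by lia)

/-- The weight of the path with steps `s` started at height `h`, where each step from height `j`
has weight `w j`. Negative heights are read as `0`; they do not occur in `pathSum`. -/
def pathWeight (w : ℕ → R) (h : ℤ) (s : Fin m → Bool) : R :=
  ∏ i : Fin m, w (h + pathHeight s i).toNat

lemma pathWeight_cons (w : ℕ → R) (h : ℤ) (b : Bool) (s : Fin m → Bool) :
    pathWeight w h (Fin.cons b s : Fin (m + 1) → Bool) =
      w h.toNat * pathWeight w (h + stepVal b) s := by
  simp only [pathWeight, Fin.prod_univ_succ, Fin.val_zero, Fin.val_succ, pathHeight_zero,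
    pathHeight_cons_succ, add_zero, add_assoc]

/-- The total weight of the nonnegative paths with `m` steps from height `h` to height `0`. -/
def pathSum (w : ℕ → R) (m : ℕ) (h : ℤ) : R :=
  ∑ s : Fin m → Bool with IsDyckFrom h s, pathWeight w h s

lemma pathSum_zero (w : ℕ → R) (h : ℤ) : pathSum w 0 h = if h = 0 then 1 else 0 := by
  have hiff (s : Fin 0 → Bool) : IsDyckFrom h s ↔ h = 0 := by
    simpa [IsDyckFrom, pathHeight_zero] using fun hh : h = 0 => hh.ge
  simp only [pathSum, hiff, Finset.filter_const]
  split_ifs <;> simp [pathWeight]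

lemma pathSum_of_neg (w : ℕ → R) (m : ℕ) {h : ℤ} (hh : h < 0) : pathSum w m h = 0 := by
  rw [pathSum, Finset.filter_false_of_mem fun s _ hs => hh.not_ge hs.nonneg, Finset.sum_empty]

lemma pathSum_succ (w : ℕ → R) (m : ℕ) {h : ℤ} (hh : 0 ≤ h) :
    pathSum w (m + 1) h = w h.toNat * (pathSum w m (h + 1) + pathSum w m (h - 1)) := by
  have hcons (b : Bool) (s : Fin m → Bool) :
      Fin.consEquiv (fun _ => Bool) (b, s) = (Fin.cons b s : Fin (m + 1) → Bool) := rfl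
  simp only [pathSum, Finset.sum_filter]
  rw [← (Fin.consEquiv fun _ => Bool).sum_comp, Fintype.sum_prod_type, Fintype.sum_bool]
  simp only [hcons, isDyckFrom_cons_iff hh, pathWeight_cons, stepVal, mul_add,
    Finset.mul_sum, mul_ite, mul_zero]
  simp [sub_eq_add_neg]

lemma pathSum_const_mul (c : R) (w : ℕ → R) (m : ℕ) (h : ℤ) :
    pathSum (fun j => c * w j) m h = c ^ m * pathSum w m h := by
  simp [pathSum, pathWeight, Finset.prod_mul_distrib, Finset.mul_sum]

lemma Etan_eq_pathSum (n : ℕ) : Etan n = pathSum (fun j => qNum (j + 1)) (2 * n) 0 := by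
  simp only [Etan, pathSum, pathWeight, isDyckFrom_zero_iff, zero_add]

lemma one_sub_X_pow_mul_Etan (n : ℕ) :
    (1 - X) ^ (2 * n) * Etan n = pathSum (fun j => 1 - X ^ (j + 1)) (2 * n) 0 := by
  simp only [Etan_eq_pathSum, ← pathSum_const_mul, qNum, mul_neg_geom_sum]

end WeightedPaths

section GaussianBinomial

variable {R : Type*} [CommRing R]

/-- The Gaussian binomial coefficient with base `p`, defined by the `q`-Pascal rule. -/
def gaussBinom (p : R) : ℕ → ℕ → R
  | _, 0 => 1
  | 0, _ + 1 => 0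
  | k + 1, l + 1 => p ^ (l + 1) * gaussBinom p k (l + 1) + gaussBinom p k l

lemma gaussBinom_zero_right (p : R) (k : ℕ) : gaussBinom p k 0 = 1 := by
  cases k <;> rfl

lemma gaussBinom_succ_succ (p : R) (k l : ℕ) :
    gaussBinom p (k + 1) (l + 1) = p ^ (l + 1) * gaussBinom p k (l + 1) + gaussBinom p k l := rfl

lemma gaussBinom_succ_right_mul (p : R) (k l : ℕ) :
    p ^ l * (1 - p ^ (l + 1)) * gaussBinom p k (l + 1) = (p ^ l - p ^ k) * gaussBinom p k l := by
  induction k generalizing l with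
  | zero => cases l <;> simp [gaussBinom]
  | succ k ih =>
    rcases l with _ | l
    · have h := ih 0
      simp only [gaussBinom_succ_succ, gaussBinom_zero_right] at h ⊢
      linear_combination p * h
    · have h := ih (l + 1)
      have h' := ih l
      simp only [gaussBinom_succ_succ p k] at h ⊢
      linear_combination p ^ (l + 2) * h + p * h'

/-- The `q`-Pochhammer symbol `(q; q)_k`. -/
def qPochhammer (q : R) (k : ℕ) : R := ∏ i ∈ Finset.range k, (1 - q ^ (i + 1))

lemma qPochhammer_succ (q : R) (k : ℕ) :
    qPochhammer q (k + 1) = qPochhammer q k * (1 - q ^ (k + 1)) :=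
  Finset.prod_range_succ _ _

lemma qPochhammer_two_mul_succ_add_one (q : R) (k : ℕ) :
    qPochhammer q (2 * (k + 1) + 1) =
      qPochhammer q (2 * k + 1) * (1 - q ^ (2 * k + 2)) * (1 - q ^ (2 * k + 3)) := by
  rw [← qPochhammer_succ, ← qPochhammer_succ, Nat.mul_add_one, Nat.add_right_comm]

end GaussianBinomial

section TransferOperator

variable {R : Type*} [CommRing R]

/-- Two steps of the walk in which a step from height `h` has weight `1 - q ^ (h + 1)`, acting on
functions of half the (even) height. The junk value `g (0 - 1)` is multiplied by `0`. -/
def twoStep (q : R) : Module.End R (ℕ → R) where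
  toFun g l := (1 - q ^ (2 * l + 1)) *
    ((1 - q ^ (2 * l + 2)) * (g (l + 1) + g l) + (1 - q ^ (2 * l)) * (g l + g (l - 1)))
  map_add' f g := by ext l; simp only [Pi.add_apply]; ring
  map_smul' c g := by ext l; simp only [Pi.smul_apply, smul_eq_mul, RingHom.id_apply]; ring

lemma twoStep_apply (q : R) (g : ℕ → R) (l : ℕ) :
    twoStep q g l = (1 - q ^ (2 * l + 1)) *
      ((1 - q ^ (2 * l + 2)) * (g (l + 1) + g l) + (1 - q ^ (2 * l)) * (g l + g (l - 1))) := rfl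

lemma pathSum_one_sub_pow_succ (q : R) (m h : ℕ) :
    pathSum (fun j => 1 - q ^ (j + 1)) (m + 1) (h - 1) =
      (1 - q ^ h) * (pathSum (fun j => 1 - q ^ (j + 1)) m h +
        pathSum (fun j => 1 - q ^ (j + 1)) m (h - 2)) := by
  rcases h with _ | h
  · simp [pathSum_of_neg]
  · rw [show ((h + 1 : ℕ) : ℤ) - 1 = h by simp, pathSum_succ _ _ (Int.natCast_nonneg h),
      Int.toNat_natCast, Nat.cast_succ, show (h : ℤ) + 1 - 2 = h - 1 by ring]

lemma pathSum_one_sub_pow_add_two (q : R) (m l : ℕ) :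
    pathSum (fun j => 1 - q ^ (j + 1)) (m + 2) (2 * l : ℕ) =
      twoStep q (fun i => pathSum (fun j => 1 - q ^ (j + 1)) m (2 * i : ℕ)) l := by
  have hmid := pathSum_one_sub_pow_succ q (m + 1) (2 * l + 1)
  have hup := pathSum_one_sub_pow_succ q m (2 * l + 2)
  have hdown := pathSum_one_sub_pow_succ q m (2 * l)
  rw [show ((2 * l + 1 : ℕ) : ℤ) - 1 = (2 * l : ℕ) by push_cast; ring,
    show ((2 * l + 1 : ℕ) : ℤ) = (2 * l + 2 : ℕ) - 1 by push_cast; ring,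
    show ((2 * l + 2 : ℕ) : ℤ) - 1 - 2 = (2 * l : ℕ) - 1 by push_cast; ring, hup, hdown,
    show ((2 * l + 2 : ℕ) : ℤ) - 2 = (2 * l : ℕ) by push_cast; ring] at hmid
  rw [hmid, twoStep_apply]
  rcases l with _ | l
  · simp
  · rw [show ((2 * (l + 1) : ℕ) : ℤ) - 2 = (2 * (l + 1 - 1) : ℕ) by lia,
      show 2 * (l + 1) + 2 = 2 * (l + 1 + 1) by ring]

/-- The vector `∏_{i=1}^k ((1 - q^(2i))² + q^(2i) twoStep)` applied to `(1 - q) δ₀`, in closed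
form. -/
def pathVec (q : R) (k l : ℕ) : R :=
  qPochhammer q (2 * k + 1) * q ^ (l * (l + 1)) * gaussBinom (q ^ 2) k l

lemma pathVec_zero_left (q : R) : pathVec q 0 = Pi.single 0 (1 - q) := by
  ext l
  rcases l with _ | l <;> simp [pathVec, qPochhammer, gaussBinom]

lemma pathVec_zero_right (q : R) (k : ℕ) : pathVec q k 0 = qPochhammer q (2 * k + 1) := by
  simp [pathVec, gaussBinom_zero_right]

lemma pathVec_succ (q : R) (k : ℕ) :
    pathVec q (k + 1) =
      q ^ (2 * k + 2) • twoStep q (pathVec q k) + (1 - q ^ (2 * k + 2)) ^ 2 • pathVec q k := by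
  ext l
  simp only [Pi.add_apply, Pi.smul_apply, smul_eq_mul, twoStep_apply, pathVec,
    qPochhammer_two_mul_succ_add_one]
  generalize qPochhammer q (2 * k + 1) = F
  have hl := gaussBinom_succ_right_mul (q ^ 2) k l
  rcases l with _ | l
  · simp only [gaussBinom_zero_right] at hl ⊢
    linear_combination (-F * q ^ (2 * k + 4) * (1 - q)) * hl
  · have hl' := gaussBinom_succ_right_mul (q ^ 2) k l
    simp only [Nat.add_sub_cancel, gaussBinom_succ_succ] at hl ⊢
    linear_combination (-F * q ^ (2 * k + 2) * (1 - q ^ (2 * l + 3)) * q ^ (l * (l + 1))) *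
      (q ^ (2 * l + 4) * hl + q ^ 2 * hl') -
      F * (1 - q ^ (2 * k + 2)) * q ^ (l * (l + 1)) * q ^ 2 * hl'

lemma one_sub_mul_pathSum_eq_twoStep_pow (q : R) (n : ℕ) :
    (fun l : ℕ => (1 - q) * pathSum (fun j => 1 - q ^ (j + 1)) (2 * n) (2 * l : ℕ)) =
      (twoStep q ^ n) (pathVec q 0) := by
  induction n with
  | zero =>
    ext l
    rcases l with _ | l
    · simp [pathSum_zero, pathVec_zero_left]
    · rw [pathSum_zero, if_neg (by lia)]
      simp [pathVec_zero_left]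
  | succ n ih =>
    rw [pow_succ', Module.End.mul_apply, ← ih]
    ext l
    rw [Nat.mul_succ, pathSum_one_sub_pow_add_two, twoStep_apply, twoStep_apply]
    ring

end TransferOperator

section ShiftOperators

variable {R : Type*} [Semiring R]

/-- The shift by `d` of two-sided sequences. -/
def shift (R : Type*) [Semiring R] (d : ℤ) : Module.End R (ℤ → R) :=
  LinearMap.funLeft R R (· + d)

lemma shift_apply (d : ℤ) (g : ℤ → R) (c : ℤ) : shift R d g c = g (c + d) := rfl

lemma shift_zero : shift R 0 = 1 := by
  ext1 g; ext1 c; simp [shift_apply]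

lemma shift_mul_shift (d e : ℤ) : shift R d * shift R e = shift R (d + e) := by
  ext1 g; ext1 c; simp [shift_apply, add_assoc]

lemma shift_pow (d : ℤ) (n : ℕ) : shift R d ^ n = shift R (n * d) := by
  induction n with
  | zero => simp [shift_zero]
  | succ n ih => rw [pow_succ, ih, shift_mul_shift]; congr 1; push_cast; ring

lemma one_add_shift_pow_apply (m : ℕ) (g : ℤ → R) (c : ℤ) :
    ((1 + shift R 1) ^ m) g c = ∑ l ∈ Finset.range (m + 1), (m.choose l : R) * g (c + l) := by
  rw [add_comm, (Commute.one_right (shift R 1)).add_pow]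
  simp [← nsmul_eq_mul', shift_pow, shift_apply]

/-- The operator `T + 2 + T⁻¹`, where `T` is the shift. -/
def shiftSum (R : Type*) [Semiring R] : Module.End R (ℤ → R) := shift R 1 + 2 + shift R (-1)

lemma shiftSum_apply (g : ℤ → R) (c : ℤ) :
    shiftSum R g c = g (c + 1) + 2 * g c + g (c - 1) := by
  simp [shiftSum, shift_apply, sub_eq_add_neg, ← one_add_one_eq_two, add_mul]

lemma shiftSum_eq_shift_mul_sq : shiftSum R = shift R (-1) * (1 + shift R 1) ^ 2 := by
  rw [shiftSum, sq]
  simp only [mul_add, add_mul, mul_one, one_mul, shift_mul_shift, neg_add_cancel,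
    neg_add_cancel_left, shift_zero, ← one_add_one_eq_two (R := Module.End R (ℤ → R))]
  abel

lemma shift_commute_one_add_shift (d e : ℤ) : Commute (shift R d) (1 + shift R e) := by
  refine (Commute.one_right _).add_right ?_
  rw [commute_iff_eq, shift_mul_shift, shift_mul_shift, add_comm]

lemma shiftSum_pow_apply_one_add_shift (n : ℕ) (g : ℤ → R) (c : ℤ) :
    (shiftSum R ^ n) ((1 + shift R 1) g) c =
      ∑ l ∈ Finset.range (2 * n + 2), ((2 * n + 1).choose l : R) * g (c - n + l) := by
  have hpow : shiftSum R ^ n * (1 + shift R 1) = shift R (-n) * (1 + shift R 1) ^ (2 * n + 1) := by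
    rw [shiftSum_eq_shift_mul_sq, ((shift_commute_one_add_shift _ _).pow_right 2).mul_pow,
      shift_pow, ← pow_mul, mul_assoc, ← pow_succ, mul_neg_one]
  rw [← Module.End.mul_apply, hpow, Module.End.mul_apply, shift_apply, one_add_shift_pow_apply,
    ← sub_eq_add_neg]

end ShiftOperators

section OddExtension

variable {R : Type*} [Ring R]

/-- The odd extension to `ℤ` of the sequence that takes the values `f 0, f 1, …` at `1, 2, …`. -/
def oddExt (f : ℕ → R) (c : ℤ) : R := c.sign * f (c.natAbs - 1)

lemma oddExt_neg (f : ℕ → R) (c : ℤ) : oddExt f (-c) = -oddExt f c := by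
  simp [oddExt]

lemma oddExt_zero (f : ℕ → R) : oddExt f 0 = 0 := by
  simp [oddExt]

lemma oddExt_natCast_add_one (f : ℕ → R) (k : ℕ) : oddExt f (k + 1) = f k := by
  rw [oddExt, Int.sign_eq_one_of_pos (by lia), Int.cast_one, one_mul]
  rfl

/-- The terms of index `l = n + 1 + k` and `l = n - 1 - k` carry the values `f k` and `-f k`. -/
lemma sum_choose_mul_oddExt (f : ℕ → R) (n : ℕ) :
    ∑ l ∈ Finset.range (2 * n + 2), ((2 * n + 1).choose l : R) * oddExt f (-n + l) =
      ∑ k ∈ Finset.range (n + 1),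
        ((chooseInt (2 * n + 1) (n - k) - chooseInt (2 * n + 1) (n - k - 1) : ℤ) : R) * f k := by
  have hpos : ∑ k ∈ Finset.range (n + 1),
      ((2 * n + 1).choose (n + 1 + k) : R) * oddExt f (-n + (n + 1 + k : ℕ)) =
      ∑ k ∈ Finset.range (n + 1), (chooseInt (2 * n + 1) (n - k) : R) * f k := by
    refine Finset.sum_congr rfl fun k hk => ?_
    obtain ⟨j, rfl⟩ := Nat.exists_eq_add_of_le (Finset.mem_range_succ_iff.1 hk)
    rw [show (-(k + j : ℕ) + (k + j + 1 + k : ℕ) : ℤ) = k + 1 by push_cast; ring,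
      oddExt_natCast_add_one, show ((k + j : ℕ) : ℤ) - k = j by push_cast; ring,
      Nat.choose_symm_of_eq_add (show 2 * (k + j) + 1 = k + j + 1 + k + j by ring)]
    simp [chooseInt]
  have hneg : ∑ l ∈ Finset.range (n + 1), ((2 * n + 1).choose l : R) * oddExt f (-n + l) =
      -∑ k ∈ Finset.range (n + 1), (chooseInt (2 * n + 1) (n - k - 1) : R) * f k := by
    rw [Finset.sum_range_succ, neg_add_cancel, oddExt_zero, mul_zero, add_zero,
      ← Finset.sum_range_reflect, Finset.sum_range_succ _ n,
      show chooseInt (2 * n + 1) ((n : ℤ) - n - 1) = 0 by simp [chooseInt], Int.cast_zero,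
      zero_mul, add_zero, ← Finset.sum_neg_distrib]
    refine Finset.sum_congr rfl fun k hk => ?_
    obtain ⟨j, rfl⟩ := Nat.exists_eq_add_of_lt (Finset.mem_range.1 hk)
    rw [show k + j + 1 - 1 - k = j by lia,
      show (-(k + j + 1 : ℕ) + (j : ℕ) : ℤ) = -(k + 1) by push_cast; ring, oddExt_neg,
      oddExt_natCast_add_one, show ((k + j + 1 : ℕ) : ℤ) - k - 1 = j by push_cast; ring]
    simp [chooseInt]
  rw [show 2 * n + 2 = n + 1 + (n + 1) by ring, Finset.sum_range_add, hneg, hpos,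
    neg_add_eq_sub]
  simp only [Int.cast_sub, sub_mul, Finset.sum_sub_distrib]

end OddExtension

section AlternatingSums

variable {R : Type*} [CommRing R]

/-- The inner alternating sum `∑_{i=0}^{2m+1} (-1)^(i+m) q^(i(2m+2-i))` of the formula. -/
def altSum (q : R) (m : ℕ) : R :=
  ∑ i ∈ Finset.range (2 * m + 2), (-1) ^ (i + m) * q ^ (i * (2 * m + 2 - i))

lemma altSum_zero (q : R) : altSum q 0 = 1 - q := by
  simp [altSum, Finset.sum_range_succ, sub_eq_add_neg]

lemma altSum_succ (q : R) (m : ℕ) :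
    altSum q (m + 1) = q ^ (2 * m + 3) * altSum q m + (-1) ^ (m + 1) * (1 - q ^ (2 * m + 3)) := by
  have hmiddle : ∀ i ∈ Finset.range (2 * m + 2),
      (-1 : R) ^ (i + 1 + (m + 1)) * q ^ ((i + 1) * (2 * m + 2 + 1 + 1 - (i + 1))) =
        q ^ (2 * m + 3) * ((-1) ^ (i + m) * q ^ (i * (2 * m + 2 - i))) := by
    intro i hi
    obtain ⟨j, hj⟩ := Nat.exists_eq_add_of_le (Finset.mem_range.1 hi).le
    rw [show 2 * m + 2 + 1 + 1 - (i + 1) = j + 1 by lia, show 2 * m + 2 - i = j by lia,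
      show (i + 1) * (j + 1) = (2 * m + 3) + i * j by rw [show 2 * m + 3 = i + j + 1 by lia]; ring]
    ring
  have hlast : (-1 : R) ^ (2 * m + 2 + 1 + (m + 1)) = (-1) ^ m := by
    rw [show 2 * m + 2 + 1 + (m + 1) = 2 * (m + 2) + m by ring, pow_add,
      (even_two_mul _).neg_one_pow, one_mul]
  rw [altSum, show 2 * (m + 1) + 2 = 2 * m + 2 + 1 + 1 by ring, Finset.sum_range_succ,
    Finset.sum_range_succ', Finset.sum_congr rfl hmiddle, ← Finset.mul_sum, ← altSum, hlast,
    show 2 * m + 2 + 1 + 1 - (2 * m + 2 + 1) = 1 by lia]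
  ring

lemma oddExt_altSum_add_one (q : R) (c : ℕ) :
    oddExt (altSum q) (c + 1) =
      q ^ (2 * c + 1) * oddExt (altSum q) c + (-1) ^ c * (1 - q ^ (2 * c + 1)) := by
  rcases c with _ | c
  · simpa [altSum_zero, oddExt_zero] using oddExt_natCast_add_one (altSum q) 0
  · rw [oddExt_natCast_add_one, Nat.cast_succ, oddExt_natCast_add_one, altSum_succ]
    ring

lemma mul_oddExt_altSum (q : R) (c : ℕ) :
    q * oddExt (altSum q) c =
      q ^ (2 * c) * oddExt (altSum q) (c - 1) - (-1) ^ c * (q - q ^ (2 * c)) := by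
  rcases c with _ | c
  · have hone : oddExt (altSum q) 1 = 1 - q := by
      simpa [oddExt_zero] using oddExt_altSum_add_one q 0
    simp [oddExt_zero, oddExt_neg, hone]
  · rw [Nat.cast_succ, add_sub_cancel_right, oddExt_altSum_add_one]
    ring

/-- The two-sided sequence `∏_{i=1}^k ((1 - q^(2i))² + q^(2i) shiftSum)` applied to `(1 + T) s`,
where `T` is the shift and `s` is the odd extension of `altSum q`. -/
def momentSeq (q : R) : ℕ → ℤ → R
  | 0 => (1 + shift R 1) (oddExt (altSum q))
  | k + 1 =>
    q ^ (2 * k + 2) • shiftSum R (momentSeq q k) + (1 - q ^ (2 * k + 2)) ^ 2 • momentSeq q k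

lemma momentSeq_zero_apply (q : R) (c : ℤ) :
    momentSeq q 0 c = oddExt (altSum q) c + oddExt (altSum q) (c + 1) := rfl

lemma momentSeq_succ_apply (q : R) (k : ℕ) (c : ℤ) :
    momentSeq q (k + 1) c = q ^ (2 * k + 2) * (momentSeq q k (c + 1) + momentSeq q k (c - 1)) +
      (1 + q ^ (4 * k + 4)) * momentSeq q k c := by
  simp only [momentSeq, Pi.add_apply, Pi.smul_apply, smul_eq_mul, shiftSum_apply]
  ring

lemma momentSeq_neg_one_sub (q : R) (k : ℕ) (c : ℤ) :
    momentSeq q k (-1 - c) = -momentSeq q k c := by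
  induction k generalizing c with
  | zero =>
    rw [momentSeq_zero_apply, momentSeq_zero_apply, show -1 - c = -(c + 1) by ring, oddExt_neg,
      show -(c + 1) + 1 = -c by ring, oddExt_neg]
    ring
  | succ k ih =>
    rw [momentSeq_succ_apply, momentSeq_succ_apply, show -1 - c + 1 = -1 - (c - 1) by ring,
      show -1 - c - 1 = -1 - (c + 1) by ring, ih, ih, ih]
    ring

lemma momentSeq_q_difference (q : R) (k c : ℕ) :
    momentSeq q k (c + 1) + q ^ (2 * k + 2) * momentSeq q k c =
      q ^ (2 * c + 1) * (momentSeq q k (c - 1) + q ^ (2 * k + 2) * momentSeq q k c) := by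
  induction k generalizing c with
  | zero =>
    have hcur := oddExt_altSum_add_one q c
    have hnext := oddExt_altSum_add_one q (c + 1)
    have hprev := mul_oddExt_altSum q c
    rw [Nat.cast_succ] at hnext
    simp only [momentSeq_zero_apply, sub_add_cancel]
    linear_combination hnext + (1 + q ^ 2) * hcur + q * hprev
  | succ k ih =>
    have hcur := ih c
    have hnext := ih (c + 1)
    have hprev : q * (momentSeq q k c + q ^ (2 * k + 2) * momentSeq q k (c - 1)) =
        q ^ (2 * c) * (momentSeq q k (c - 2) + q ^ (2 * k + 2) * momentSeq q k (c - 1)) := by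
      rcases c with _ | c
      · have hneg_one : momentSeq q k (-1) = -momentSeq q k 0 := momentSeq_neg_one_sub q k 0
        have hneg_two : momentSeq q k (-2) = -momentSeq q k 1 := momentSeq_neg_one_sub q k 1
        simp only [Nat.cast_zero, zero_add, zero_sub, hneg_one, hneg_two] at hcur ⊢
        linear_combination hcur
      · have hpred := ih c
        rw [Nat.cast_succ, add_sub_cancel_right, show (c : ℤ) + 1 - 2 = c - 1 by ring]
        linear_combination q * hpred
    rw [Nat.cast_succ, add_sub_cancel_right] at hnext
    rw [momentSeq_succ_apply, momentSeq_succ_apply, momentSeq_succ_apply, add_sub_cancel_right,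
      sub_add_cancel, show (c : ℤ) - 1 - 1 = c - 2 by ring]
    linear_combination (1 + q ^ (4 * k + 6)) * hcur + q ^ (2 * k + 2) * hnext +
      q ^ (2 * k + 3) * hprev

lemma momentSeq_apply_zero (q : R) (k : ℕ) : momentSeq q k 0 = qPochhammer q (2 * k + 1) := by
  induction k with
  | zero => simp [momentSeq_zero_apply, oddExt, altSum_zero, qPochhammer]
  | succ k ih =>
    have hdiff := momentSeq_q_difference q k 0
    have hreflect : momentSeq q k (-1) = -momentSeq q k 0 := momentSeq_neg_one_sub q k 0
    simp only [Nat.cast_zero, zero_add, zero_sub, hreflect] at hdiff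
    rw [momentSeq_succ_apply, zero_add, zero_sub, hreflect, qPochhammer_two_mul_succ_add_one, ← ih]
    linear_combination q ^ (2 * k + 2) * hdiff

end AlternatingSums

lemma map_pow_apply_eq_of_recurrence {R V W M : Type*} [Semiring R] [AddCommMonoid V] [Module R V]
    [AddCommMonoid W] [Module R W] [AddCancelCommMonoid M] [Module R M] {f : Module.End R V}
    {g : Module.End R W} {φ : V →ₗ[R] M} {ψ : W →ₗ[R] M} {v : ℕ → V} {w : ℕ → W} {a b : ℕ → R}
    (ha : ∀ k, IsSMulRegular M (a k)) (hv : ∀ k, v (k + 1) = a k • f (v k) + b k • v k)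
    (hw : ∀ k, w (k + 1) = a k • g (w k) + b k • w k) (h : ∀ k, φ (v k) = ψ (w k)) (n k : ℕ) :
    φ ((f ^ n) (v k)) = ψ ((g ^ n) (w k)) := by
  induction n generalizing k with
  | zero => exact h k
  | succ n ih =>
    refine ha k ?_
    have hsucc := ih (k + 1)
    simpa only [hv, hw, map_add, map_smul, ih, add_left_inj, ← Module.End.mul_apply, ← pow_succ]
      using hsucc

theorem stmt11 (n : ℕ) :
    (1 - X : Polynomial ℤ) ^ (2*n+1) * Etan n =
      ∑ k ∈ Finset.range (n+1),
        ((chooseInt (2*n+1) ((n : ℤ) - k) - chooseInt (2*n+1) ((n : ℤ) - k - 1) : ℤ) :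
            Polynomial ℤ) *
          ∑ i ∈ Finset.range (2*k+2), (-1 : Polynomial ℤ)^(i+k) * X ^ (i * (2*k+2-i)) := by
  have hregular (k : ℕ) : IsSMulRegular ℤ[X] (X ^ (2 * k + 2) : ℤ[X]) :=
    IsSMulRegular.of_ne_zero (pow_ne_zero _ X_ne_zero)
  have htwoStep : (1 - X) * pathSum (fun j => 1 - X ^ (j + 1)) (2 * n) 0 =
      (twoStep X ^ n) (pathVec (X : ℤ[X]) 0) 0 :=
    congrFun (one_sub_mul_pathSum_eq_twoStep_pow X n) 0
  have hmoments : (twoStep X ^ n) (pathVec (X : ℤ[X]) 0) 0 =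
      (shiftSum ℤ[X] ^ n) (momentSeq X 0) 0 :=
    map_pow_apply_eq_of_recurrence (φ := LinearMap.proj 0) (ψ := LinearMap.proj 0)
      (g := shiftSum ℤ[X]) (w := momentSeq X) hregular
      (pathVec_succ X) (fun _ => rfl)
      (fun k => (pathVec_zero_right X k).trans (momentSeq_apply_zero X k).symm) n 0
  rw [pow_succ', mul_assoc, one_sub_X_pow_mul_Etan, htwoStep, hmoments, momentSeq,
    shiftSum_pow_apply_one_add_shift, zero_sub, sum_choose_mul_oddExt]
  rfl
end
end

section
/- The Touchard–Riordan formula: \sum_{I \in Inv(2n)} q^{cr(I)/2} = \frac{1}{(1-q)^n} \sum_{k=0}^n \left( \binom{2n}{n-k} - \binom{2n}{n-k-1} \right) (-1)^k q^{k(k+1)/2}, where Inv(2n) is the set of fixed-point-free involutions of {1,...,2n} and cr(I)/2 is the number of pairs (i,j) with i < j < I(i) < I(j). -/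
open Finset Polynomial
open scoped Classical

noncomputable section
/-- Number of crossings of a perfect matching (fixed-point-free involution):
pairs `(i,j)` with `i < j < I(i) < I(j)`. -/
def crMatch {m : ℕ} (σ : Equiv.Perm (Fin m)) : ℕ :=
  ((Finset.univ ×ˢ Finset.univ : Finset (Fin m × Fin m)).filter fun p =>
    p.1 < p.2 ∧ p.2 < σ p.1 ∧ σ p.1 < σ p.2).card

/-!
Allow partial matchings, with `k` unmatched points among `m`, and let `C(m, k)` count them by
crossings, where an unmatched point stands for an arc coming from `-∞`. Adding a new least point
either adds an unmatched point, or closes the arc of one of the unmatched points `x`; the latter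
creates exactly one crossing for each unmatched point below `x`. Hence
`C(m + 1, k) = C(m, k - 1) + (1 + q + ⋯ + q ^ k) C(m, k + 1)`.

After multiplication by `(1 - q) ^ l (1 - q) ⋯ (1 - q ^ k)`, where `m = k + 2 l`, this recurrence
also governs the coefficients of `t ^ l` in `(1 - t) (1 + t) ^ (k + 2 l) Θ_k(t)`, where
`Θ_k(t) = ∑ j, (-1) ^ j q ^ (j (j + 1) / 2) (1 - q ^ (j + 1)) ⋯ (1 - q ^ (j + k)) t ^ j`, because
`(1 + t) Θ_k = (1 - q ^ k) Θ_{k - 1} + t Θ_{k + 1}`. For `k = 0` the first term on the right is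
replaced by `1`, which does not contribute because the coefficients of
`(1 - t) (1 + t) ^ (2 l + 1)` are antisymmetric, so that the one of `t ^ (l + 1)` vanishes.
-/

theorem chooseInt_natCast (a b : ℕ) : chooseInt a b = a.choose b := by
  simp [chooseInt]

section BallotSum

open scoped PowerSeries

local notation "𝐭" => PowerSeries.X

variable {R : Type*} [CommRing R]

theorem coeff_one_sub_X_mul_one_add_X_pow (m i : ℕ) :
    PowerSeries.coeff i ((1 - 𝐭) * (1 + 𝐭) ^ m : R⟦X⟧) =
      ((chooseInt m i - chooseInt m (i - 1) : ℤ) : R) := by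
  have coeff_one_add_X_pow (i : ℕ) :
      PowerSeries.coeff i ((1 + 𝐭) ^ m : R⟦X⟧) = m.choose i := by
    rw [← Polynomial.coeff_one_add_X_pow R m i, ← Polynomial.coeff_coe]
    simp
  rw [sub_mul, one_mul, map_sub, coeff_one_add_X_pow]
  cases i with
  | zero => simp [chooseInt]
  | succ i =>
    have pred : ((i + 1 : ℕ) : ℤ) - 1 = i := by simp
    rw [PowerSeries.coeff_succ_X_mul, coeff_one_add_X_pow, pred, chooseInt_natCast,
      chooseInt_natCast, Int.cast_sub, Int.cast_natCast, Int.cast_natCast]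

theorem coeff_succ_one_sub_X_mul_one_add_X_pow_odd (l : ℕ) :
    PowerSeries.coeff (l + 1) ((1 - 𝐭) * (1 + 𝐭) ^ (2 * l + 1) : R⟦X⟧) = 0 := by
  have pred : ((l + 1 : ℕ) : ℤ) - 1 = l := by simp
  rw [coeff_one_sub_X_mul_one_add_X_pow, pred, chooseInt_natCast, chooseInt_natCast,
    Nat.choose_symm_half, sub_self, Int.cast_zero]

/-- The series `Θ_k(t)` with coefficients
`(-1) ^ j q ^ (j (j + 1) / 2) (1 - q ^ (j + 1)) ⋯ (1 - q ^ (j + k))`, which for `k = 0` is the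
partial theta function. The exponent `j (j + 1) / 2` is written as a binomial coefficient, to which
Pascal's rule applies. -/
def partialTheta (q : R) (k : ℕ) : R⟦X⟧ :=
  PowerSeries.mk fun j => (-1) ^ j * q ^ (j + 1).choose 2 * ∏ i ∈ range k, (1 - q ^ (j + i + 1))

variable (q : R) (k l : ℕ)

theorem one_add_X_mul_partialTheta_zero :
    (1 + 𝐭) * partialTheta q 0 = 1 + 𝐭 * partialTheta q 1 := by
  ext (_ | j)
  · simp [partialTheta]
  · simp only [partialTheta, add_mul, one_mul, map_add, PowerSeries.coeff_succ_X_mul,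
      PowerSeries.coeff_mk, PowerSeries.coeff_one, Nat.choose_succ_succ' (j + 1) 1,
      Nat.choose_one_right, prod_range_zero, prod_range_one, Nat.add_eq_zero_iff, one_ne_zero,
      and_false, if_false]
    ring

theorem one_add_X_mul_partialTheta_succ :
    (1 + 𝐭) * partialTheta q (k + 1) =
      PowerSeries.C (1 - q ^ (k + 1)) * partialTheta q k + 𝐭 * partialTheta q (k + 2) := by
  ext (_ | j)
  · simp [partialTheta, prod_range_succ, mul_comm]
  · have prod_shift : ∏ i ∈ range (k + 1), (1 - q ^ (j + i + 1)) =
        (∏ i ∈ range k, (1 - q ^ (j + 1 + i + 1))) * (1 - q ^ (j + 1)) := by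
      simp only [prod_range_succ', ← add_assoc, add_right_comm, add_zero]
    simp only [partialTheta, add_mul, one_mul, map_add, PowerSeries.coeff_succ_X_mul,
      PowerSeries.coeff_C_mul, PowerSeries.coeff_mk, prod_range_succ _ (k + 1), prod_shift,
      Nat.choose_succ_succ' (j + 1) 1, Nat.choose_one_right]
    rw [prod_range_succ _ k]
    ring

/-- The combination of the coefficients of `Θ_k` with the ballot numbers
`(k + 2 l choose l - j) - (k + 2 l choose l - j - 1)` as weights, as a coefficient of a product of
power series. It is the right-hand side of the Touchard–Riordan formula for matchings of `k + 2 l`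
points leaving `k` of them unmatched. -/
def ballotSum (q : R) (k l : ℕ) : R :=
  PowerSeries.coeff l ((1 - 𝐭) * (1 + 𝐭) ^ (k + 2 * l) * partialTheta q k)

theorem ballotSum_zero_right : ballotSum q k 0 = ∏ i ∈ range k, (1 - q ^ (i + 1)) := by
  simp [ballotSum, partialTheta]

theorem ballotSum_zero_succ : ballotSum q 0 (l + 1) = ballotSum q 1 l := by
  have expand : (1 - 𝐭) * (1 + 𝐭) ^ (0 + 2 * (l + 1)) * partialTheta q 0 =
      (1 - 𝐭) * (1 + 𝐭) ^ (2 * l + 1) +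
        𝐭 * ((1 - 𝐭) * (1 + 𝐭) ^ (1 + 2 * l) * partialTheta q 1) := by
    linear_combination (1 - 𝐭) * (1 + 𝐭) ^ (2 * l + 1) * one_add_X_mul_partialTheta_zero q
  rw [ballotSum, expand, map_add, coeff_succ_one_sub_X_mul_one_add_X_pow_odd,
    PowerSeries.coeff_succ_X_mul, zero_add, ballotSum]

theorem ballotSum_succ_succ :
    ballotSum q (k + 1) (l + 1) =
      (1 - q ^ (k + 1)) * ballotSum q k (l + 1) + ballotSum q (k + 2) l := by
  have expand : (1 - 𝐭) * (1 + 𝐭) ^ (k + 1 + 2 * (l + 1)) * partialTheta q (k + 1) =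
      PowerSeries.C (1 - q ^ (k + 1)) *
          ((1 - 𝐭) * (1 + 𝐭) ^ (k + 2 * (l + 1)) * partialTheta q k) +
        𝐭 * ((1 - 𝐭) * (1 + 𝐭) ^ (k + 2 + 2 * l) * partialTheta q (k + 2)) := by
    linear_combination (1 - 𝐭) * (1 + 𝐭) ^ (k + 2 + 2 * l) * one_add_X_mul_partialTheta_succ q k
  rw [ballotSum, expand, map_add, PowerSeries.coeff_C_mul, PowerSeries.coeff_succ_X_mul,
    ballotSum, ballotSum]

theorem ballotSum_eq_sum :
    ballotSum q k l = ∑ j ∈ range (l + 1),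
      ((chooseInt (k + 2 * l) ((l : ℤ) - j) - chooseInt (k + 2 * l) ((l : ℤ) - j - 1) : ℤ) : R) *
        ((-1) ^ j * q ^ (j * (j + 1) / 2) * ∏ i ∈ range k, (1 - q ^ (j + i + 1))) := by
  rw [ballotSum, mul_comm, PowerSeries.coeff_mul, Nat.sum_antidiagonal_eq_sum_range_succ_mk]
  refine sum_congr rfl fun j hj => ?_
  rw [coeff_one_sub_X_mul_one_add_X_pow, Nat.cast_sub (mem_range_succ_iff.1 hj), partialTheta,
    PowerSeries.coeff_mk, Nat.choose_two_right, Nat.add_sub_cancel, mul_comm (j + 1) j, mul_comm]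

end BallotSum

theorem sum_card_filter_lt {α M : Type*} [LinearOrder α] [AddCommMonoid M] (s : Finset α)
    (f : ℕ → M) : ∑ x ∈ s, f #{y ∈ s | y < x} = ∑ i ∈ range #s, f i := by
  induction s using Finset.induction_on_max with
  | empty => simp
  | insert a s lt_a ih =>
    have notMem : a ∉ s := fun h => lt_irrefl a (lt_a a h)
    have filter_self : {y ∈ insert a s | y < a} = s := by grind
    have filter_old {x} (hx : x ∈ s) : {y ∈ insert a s | y < x} = {y ∈ s | y < x} := by grind
    rw [sum_insert notMem, card_insert_of_notMem notMem, sum_range_succ, filter_self, ← ih,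
      add_comm, sum_congr rfl fun x hx => by rw [filter_old hx]]

section PartialMatching

open Equiv.Perm (decomposeFin)

variable {α : Type*} [Fintype α] {m : ℕ}

/-- The fixed points of a permutation, which are the unmatched points when an involution is viewed
as a partial matching. -/
def unmatched (σ : Equiv.Perm α) : Finset α := {i | σ i = i}

theorem mem_unmatched {σ : Equiv.Perm α} {i : α} : i ∈ unmatched σ ↔ σ i = i :=
  mem_filter_univ i

/-- The partial matchings of `m` points that leave `k` points unmatched, encoded as the involutions
with `k` fixed points. -/
def partialMatchings (m k : ℕ) : Finset (Equiv.Perm (Fin m)) :=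
  {σ | Function.Involutive σ ∧ #(unmatched σ) = k}

theorem mem_partialMatchings {σ : Equiv.Perm (Fin m)} {k : ℕ} :
    σ ∈ partialMatchings m k ↔ Function.Involutive σ ∧ #(unmatched σ) = k :=
  mem_filter_univ σ

/-- The arcs with right ends `a < b` in a partial matching cross, where an unmatched point `a`
counts as the right end of an arc coming from `-∞`. Naming an arc by its right end makes the
crossings of a partial matching persist when a new least point is added. -/
def IsCrossing [LT α] (σ : Equiv.Perm α) (a b : α) : Prop :=
  (σ a < σ b ∨ σ a = a) ∧ σ b < a ∧ a < b

/-- The number of crossings of a partial matching, including those with the arcs from `-∞` to the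
unmatched points. -/
def crossingNumber [LT α] (σ : Equiv.Perm α) : ℕ :=
  #{p : α × α | IsCrossing σ p.1 p.2}

theorem crossingNumber_eq_sum [LT α] (σ : Equiv.Perm α) :
    crossingNumber σ = ∑ a, ∑ b, if IsCrossing σ a b then 1 else 0 := by
  rw [crossingNumber, card_filter, Fintype.sum_prod_type]

theorem crossingNumber_eq_sum_succ (σ : Equiv.Perm (Fin (m + 1))) :
    crossingNumber σ = ∑ a : Fin m, ∑ b : Fin m, if IsCrossing σ a.succ b.succ then 1 else 0 := by
  have not_left (b) : ¬IsCrossing σ 0 b := fun h => Fin.not_lt_zero _ h.2.1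
  have not_right (a) : ¬IsCrossing σ a 0 := fun h => Fin.not_lt_zero _ h.2.2
  simp only [crossingNumber_eq_sum, Fin.sum_univ_succ (n := m), not_left, not_right, if_false,
    sum_const_zero, zero_add]

/- `decomposeFin.symm (0, e)` adds to `e` a new least point as an unmatched point, and
`decomposeFin.symm (x.succ, e)` adds it as the partner of `x`, when `x` is unmatched. -/

section AddUnmatched

variable (e : Equiv.Perm (Fin m)) (k : ℕ)

theorem involutive_decomposeFin_symm_zero_iff :
    Function.Involutive (decomposeFin.symm (0, e)) ↔ Function.Involutive e := by
  simp [Function.Involutive, Fin.forall_fin_succ]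

theorem unmatched_decomposeFin_symm_zero :
    unmatched (decomposeFin.symm (0, e)) = cons 0 ((unmatched e).map (Fin.succEmb m))
      (by simp [Fin.succ_ne_zero]) := by
  ext i
  cases i using Fin.cases <;> simp [mem_unmatched, Fin.succ_ne_zero]

theorem decomposeFin_symm_zero_mem_partialMatchings_iff :
    decomposeFin.symm (0, e) ∈ partialMatchings (m + 1) k ↔
      ∃ j, k = j + 1 ∧ e ∈ partialMatchings m j := by
  simp only [mem_partialMatchings, involutive_decomposeFin_symm_zero_iff,
    unmatched_decomposeFin_symm_zero, card_cons, card_map]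
  grind

theorem isCrossing_decomposeFin_symm_zero_iff (a b : Fin m) :
    IsCrossing (decomposeFin.symm (0, e)) a.succ b.succ ↔ IsCrossing e a b := by
  simp [IsCrossing]

theorem crossingNumber_decomposeFin_symm_zero :
    crossingNumber (decomposeFin.symm (0, e)) = crossingNumber e := by
  rw [crossingNumber_eq_sum_succ, crossingNumber_eq_sum]
  simp only [isCrossing_decomposeFin_symm_zero_iff]

end AddUnmatched

section AddArc

variable {e : Equiv.Perm (Fin m)} {x : Fin m} (k : ℕ)

theorem decomposeFin_symm_succ_apply_succ (hx : e x = x) (a : Fin m) :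
    decomposeFin.symm (x.succ, e) a.succ = if a = x then 0 else (e a).succ := by
  rw [Equiv.Perm.decomposeFin_symm_apply_succ]
  split_ifs with ha
  · rw [ha, hx, Equiv.swap_apply_right]
  · have : e a ≠ x := fun h => ha (e.injective (h.trans hx.symm))
    exact Equiv.swap_apply_of_ne_of_ne (Fin.succ_ne_zero _) (by simpa using this)

theorem involutive_decomposeFin_symm_succ_iff :
    Function.Involutive (decomposeFin.symm (x.succ, e)) ↔ Function.Involutive e ∧ e x = x := by
  have apply_zero : decomposeFin.symm (x.succ, e) 0 = x.succ :=
    Equiv.Perm.decomposeFin_symm_apply_zero _ _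
  have apply_apply (hx : e x = x) (a : Fin m) :
      decomposeFin.symm (x.succ, e) (decomposeFin.symm (x.succ, e) a.succ) = (e (e a)).succ := by
    rw [decomposeFin_symm_succ_apply_succ hx]
    split_ifs with ha
    · rw [apply_zero, ha, hx, hx]
    · have : e a ≠ x := fun h => ha (e.injective (h.trans hx.symm))
      rw [decomposeFin_symm_succ_apply_succ hx, if_neg this]
  constructor
  · intro h
    have hx : e x = x := by
      have h_zero := h 0
      rw [apply_zero, Equiv.Perm.decomposeFin_symm_apply_succ, Equiv.swap_apply_eq_iff,
        Equiv.swap_apply_left] at h_zero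
      exact Fin.succ_injective _ h_zero
    exact ⟨fun a => Fin.succ_injective _ ((apply_apply hx a).symm.trans (h a.succ)), hx⟩
  · rintro ⟨h, hx⟩
    refine Fin.forall_fin_succ.2 ⟨?_, fun a => by rw [apply_apply hx, h a]⟩
    rw [apply_zero, decomposeFin_symm_succ_apply_succ hx, if_pos rfl]

theorem unmatched_decomposeFin_symm_succ (hx : e x = x) :
    unmatched (decomposeFin.symm (x.succ, e)) = ((unmatched e).erase x).map (Fin.succEmb m) := by
  ext i
  cases i using Fin.cases with
  | zero => simp [mem_unmatched, Fin.succ_ne_zero]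
  | succ a =>
    rw [mem_unmatched, decomposeFin_symm_succ_apply_succ hx]
    by_cases ha : a = x <;> simp [mem_unmatched, ha, (Fin.succ_ne_zero _).symm]

theorem decomposeFin_symm_succ_mem_partialMatchings_iff :
    decomposeFin.symm (x.succ, e) ∈ partialMatchings (m + 1) k ↔
      e ∈ partialMatchings m (k + 1) ∧ x ∈ unmatched e := by
  rw [mem_partialMatchings, mem_partialMatchings, involutive_decomposeFin_symm_succ_iff,
    mem_unmatched, and_right_comm]
  refine and_congr_left fun hx => and_congr_right fun _ => ?_
  rw [unmatched_decomposeFin_symm_succ hx, card_map, ← card_erase_add_one (mem_unmatched.2 hx),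
    Nat.add_right_cancel_iff]

theorem isCrossing_decomposeFin_symm_succ_iff (hx : e x = x) (a b : Fin m) :
    IsCrossing (decomposeFin.symm (x.succ, e)) a.succ b.succ ↔
      IsCrossing e a b ∨ b = x ∧ a ∈ unmatched e ∧ a < x := by
  simp only [IsCrossing, mem_unmatched, decomposeFin_symm_succ_apply_succ hx]
  grind

theorem crossingNumber_decomposeFin_symm_succ (hx : e x = x) :
    crossingNumber (decomposeFin.symm (x.succ, e)) =
      crossingNumber e + #{y ∈ unmatched e | y < x} := by
  have indicator (a b : Fin m) :
      (if IsCrossing (decomposeFin.symm (x.succ, e)) a.succ b.succ then 1 else 0) =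
        (if IsCrossing e a b then 1 else 0) +
          if b = x then (if a ∈ unmatched e ∧ a < x then 1 else 0) else 0 := by
    have not_right : ¬IsCrossing e a x := fun h => lt_asymm h.2.2 (hx ▸ h.2.1)
    rw [isCrossing_decomposeFin_symm_succ_iff hx]
    grind
  rw [crossingNumber_eq_sum_succ, crossingNumber_eq_sum]
  simp only [indicator, sum_add_distrib, sum_ite_eq', mem_univ, if_true]
  rw [← card_filter, ← filter_filter, filter_mem_eq_inter, univ_inter]

end AddArc

section CrossingSum

variable {R : Type*} [CommSemiring R] (q : R) (k : ℕ)

/-- The generating function by crossings of the partial matchings of `m` points that leave `k`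
points unmatched. -/
def crossingSum (m k : ℕ) : R :=
  ∑ σ ∈ partialMatchings m k, q ^ crossingNumber σ

theorem crossingSum_eq_sum_ite :
    crossingSum q m k =
      ∑ σ, if σ ∈ partialMatchings m k then q ^ crossingNumber σ else 0 := by
  rw [sum_ite_mem, univ_inter, crossingSum]

theorem crossingSum_zero_zero : crossingSum q 0 0 = 1 := by
  simp [crossingSum, partialMatchings, unmatched, crossingNumber, Function.Involutive]

theorem crossingSum_eq_zero_of_lt (h : m < k) : crossingSum q m k = 0 := by
  have empty : partialMatchings m k = ∅ := by
    refine filter_eq_empty_iff.2 fun σ _ hσ => h.not_ge ?_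
    simpa only [hσ.2, Fintype.card_fin] using card_le_univ (unmatched σ)
  rw [crossingSum, empty, sum_empty]

theorem sum_pow_crossingNumber_decomposeFin_symm_succ :
    (∑ e : Equiv.Perm (Fin m), ∑ x : Fin m,
      if decomposeFin.symm (x.succ, e) ∈ partialMatchings (m + 1) k then
        q ^ crossingNumber (decomposeFin.symm (x.succ, e)) else 0) =
      (∑ i ∈ range (k + 1), q ^ i) * crossingSum q m (k + 1) := by
  rw [crossingSum_eq_sum_ite, mul_sum]
  refine sum_congr rfl fun e _ => ?_
  simp only [decomposeFin_symm_succ_mem_partialMatchings_iff, ite_and]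
  split_ifs with he
  · have card_unmatched : #(unmatched e) = k + 1 := (mem_partialMatchings.1 he).2
    rw [← card_unmatched, ← sum_card_filter_lt, sum_mul, sum_ite_mem, univ_inter]
    refine sum_congr rfl fun x hx => ?_
    rw [crossingNumber_decomposeFin_symm_succ (mem_unmatched.1 hx), pow_add, mul_comm]
  · simp

theorem crossingSum_succ :
    crossingSum q (m + 1) k =
      (∑ e : Equiv.Perm (Fin m), if decomposeFin.symm (0, e) ∈ partialMatchings (m + 1) k then
        q ^ crossingNumber e else 0) +
      (∑ i ∈ range (k + 1), q ^ i) * crossingSum q m (k + 1) := by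
  rw [← sum_pow_crossingNumber_decomposeFin_symm_succ, crossingSum_eq_sum_ite,
    ← decomposeFin.symm.sum_comp, Fintype.sum_prod_type_right, ← sum_add_distrib]
  simp only [Fin.sum_univ_succ, crossingNumber_decomposeFin_symm_zero]

theorem crossingSum_succ_zero : crossingSum q (m + 1) 0 = crossingSum q m 1 := by
  simp [crossingSum_succ, decomposeFin_symm_zero_mem_partialMatchings_iff]

theorem crossingSum_succ_succ :
    crossingSum q (m + 1) (k + 1) =
      crossingSum q m k + (∑ i ∈ range (k + 2), q ^ i) * crossingSum q m (k + 2) := by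
  rw [crossingSum_succ, crossingSum_eq_sum_ite q k]
  simp [decomposeFin_symm_zero_mem_partialMatchings_iff]

theorem crossingSum_self : crossingSum q k k = 1 := by
  induction k with
  | zero => exact crossingSum_zero_zero q
  | succ k ih =>
    rw [crossingSum_succ_succ, ih, crossingSum_eq_zero_of_lt q _ (by lia), mul_zero, add_zero]

theorem crossingNumber_eq_crMatch {σ : Equiv.Perm (Fin m)} (hσ : Function.Involutive σ)
    (hne : ∀ i, σ i ≠ i) : crossingNumber σ = crMatch σ := by
  refine card_equiv (Equiv.prodCongr σ σ) fun p => ?_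
  simp [IsCrossing, hσ _, hne]

theorem sum_pow_crMatch_eq_crossingSum (m : ℕ) :
    ∑ σ ∈ Finset.univ.filter
        (fun σ : Equiv.Perm (Fin m) => σ * σ = 1 ∧ ∀ i, σ i ≠ i),
      q ^ crMatch σ = crossingSum q m 0 := by
  have mem_iff (σ : Equiv.Perm (Fin m)) : (σ * σ = 1 ∧ ∀ i, σ i ≠ i) ↔
      Function.Involutive σ ∧ #(unmatched σ) = 0 := by
    simp [Equiv.Perm.ext_iff, Function.Involutive, unmatched, filter_eq_empty_iff]
  refine sum_congr (filter_congr fun σ _ => mem_iff σ) fun σ hσ => ?_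
  have hσ := (mem_filter_univ σ).1 hσ
  rw [crossingNumber_eq_crMatch hσ.1 ((mem_iff σ).2 hσ).2]

end CrossingSum

end PartialMatching

section TouchardRiordan

variable {R : Type*} [CommRing R]

theorem one_sub_pow_mul_prod_mul_crossingSum (q : R) (k l : ℕ) :
    (1 - q) ^ l * (∏ i ∈ range k, (1 - q ^ (i + 1))) * crossingSum q (k + 2 * l) k =
      ballotSum q k l := by
  induction l generalizing k with
  | zero =>
    rw [mul_zero, add_zero, crossingSum_self, ballotSum_zero_right, pow_zero, one_mul, mul_one]
  | succ l ih =>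
    induction k with
    | zero =>
      rw [ballotSum_zero_succ, ← ih, prod_range_one, prod_range_zero,
        show 0 + 2 * (l + 1) = 1 + 2 * l + 1 by ring, crossingSum_succ_zero]
      ring
    | succ k ihk =>
      rw [ballotSum_succ_succ, ← ih, ← ihk,
        show k + 1 + 2 * (l + 1) = k + 2 * (l + 1) + 1 by ring, crossingSum_succ_succ,
        prod_range_succ _ (k + 1), prod_range_succ _ k, ← mul_neg_geom_sum q (k + 2),
        show k + 2 + 2 * l = k + 2 * (l + 1) by ring]
      ring

theorem stmt18_general (q : R) (n : ℕ) :
    (1 - q) ^ n *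
      ∑ σ ∈ Finset.univ.filter
          (fun σ : Equiv.Perm (Fin (2 * n)) => σ * σ = 1 ∧ ∀ i, σ i ≠ i),
        q ^ crMatch σ =
      ∑ k ∈ Finset.range (n + 1),
        ((chooseInt (2 * n) ((n : ℤ) - k) - chooseInt (2 * n) ((n : ℤ) - k - 1) : ℤ) : R) *
          (-1) ^ k * q ^ (k * (k + 1) / 2) := by
  have key := one_sub_pow_mul_prod_mul_crossingSum q 0 n
  rw [ballotSum_eq_sum] at key
  simpa only [sum_pow_crMatch_eq_crossingSum, prod_range_zero, mul_one, zero_add, mul_assoc]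
    using key

end TouchardRiordan

theorem stmt18 (n : ℕ) :
    (1 - X : Polynomial ℤ) ^ n *
      ∑ σ ∈ Finset.univ.filter
          (fun σ : Equiv.Perm (Fin (2*n)) => σ * σ = 1 ∧ ∀ i, σ i ≠ i),
        (X : Polynomial ℤ) ^ crMatch σ =
      ∑ k ∈ Finset.range (n+1),
        ((chooseInt (2*n) ((n : ℤ) - k) - chooseInt (2*n) ((n : ℤ) - k - 1) : ℤ) :
            Polynomial ℤ) *
          (-1 : Polynomial ℤ)^k * X ^ (k*(k+1)/2) :=
  stmt18_general X n
end
end
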